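/- For every finite coloring ℕ = C₁ ∪ … ∪ C_r there exist an index s and an infinite sequence (b_n) of natural numbers (with b_n ≥ 2) such that b_n ∈ C_s and (b_{n+1})^{b_n} ∈ C_s for every n. -/

import Mathlib

open scoped Classical

noncomputable def upperDensity (A : Set ℕ) : ℝ :=
  Filter.limsup (fun n => (((Finset.Icc 1 n).filter (fun m => m ∈ A)).card : ℝ) / n) Filter.atTop

noncomputable def lowerDensity (A : Set ℕ) : ℝ :=
  Filter.liminf (fun n => (((Finset.Icc 1 n).filter (fun m => m ∈ A)).card : ℝ) / n) Filter.atTop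

/-- The difference set Δ(X) = {x' - x : x, x' ∈ X, x' > x}. -/
def diffSet (X : Set ℕ) : Set ℕ := {d | ∃ x ∈ X, ∃ x' ∈ X, x < x' ∧ x' - x = d}

/-- A is thick if it contains arbitrarily long intervals of consecutive integers. -/
def Thick (A : Set ℕ) : Prop := ∀ k : ℕ, ∃ a : ℕ, ∀ i < k, a + i ∈ A

/-- A is a Δ-set if it contains the difference set of some infinite X. -/
def IsDeltaSet (A : Set ℕ) : Prop := ∃ X : Set ℕ, X.Infinite ∧ diffSet X ⊆ A

/-!
Fix `k ≥ 2` and take `b n = k ^ x n`. Then `b (n + 1) ^ b n = k ^ (k ^ x n * x (n + 1))`, so it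
is enough to find, for each finite coloring `c` of the exponents, a sequence `x` of positive numbers
such that all `x n` and all `k ^ x n * x (n + 1)` have the same color.

Let `U` be an ultrafilter all of whose members are Δ-sets (a nonzero idempotent will do), and give
`n` the color that `c (k ^ n * t)` takes for `U`-almost all `t`. Some class `A` of this limit
coloring has a difference set meeting every Δ-set, by a pigeonhole count of disjoint translates;
hence `k ^ m * t ∈ Δ(A)` for every `m` and `U`-almost all `t`. Given `x ∈ Δ(A)`, say with
`m, m + x ∈ A`, put `y = k ^ m * t`. For almost all `t`, both `y` and `k ^ x * y = k ^ (m + x) * t`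
have the color of `A`, and `y ∈ Δ(A)` again, so the construction can be iterated.
-/

/-- A set of naturals is Δ* if it meets every Δ-set. For a fixed ultrafilter of Δ-sets, a Δ* set
then contains `m * t` for almost all `t`, whatever `m > 0`. -/
def IsDeltaStar (A : Set ℕ) : Prop := ∀ D : Set ℕ, IsDeltaSet D → (A ∩ D).Nonempty

theorem mem_diffSet_iff {X : Set ℕ} {d : ℕ} : d ∈ diffSet X ↔ 0 < d ∧ ∃ a ∈ X, a + d ∈ X := by
  constructor
  · rintro ⟨a, ha, a', ha', hlt, rfl⟩
    exact ⟨Nat.sub_pos_of_lt hlt, a, ha, by rwa [Nat.add_sub_cancel' hlt.le]⟩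
  · rintro ⟨hd, a, ha, had⟩
    exact ⟨a, ha, a + d, had, Nat.lt_add_of_pos_right hd, Nat.add_sub_cancel_left ..⟩

theorem diffSet_mono {X Y : Set ℕ} (h : X ⊆ Y) : diffSet X ⊆ diffSet Y :=
  fun _ ⟨a, ha, a', ha', hd⟩ => ⟨a, h ha, a', h ha', hd⟩

namespace IsDeltaSet

variable {D E : Set ℕ}

theorem mono (hD : IsDeltaSet D) (h : D ⊆ E) : IsDeltaSet E :=
  let ⟨X, hX, hXD⟩ := hD
  ⟨X, hX, hXD.trans h⟩

theorem image_mul_left (hD : IsDeltaSet D) {m : ℕ} (hm : 0 < m) : IsDeltaSet ((m * ·) '' D) := by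
  obtain ⟨X, hX, hXD⟩ := hD
  refine ⟨(m * ·) '' X, hX.image (mul_right_injective₀ hm.ne').injOn, ?_⟩
  rintro _ ⟨_, ⟨a, ha, rfl⟩, _, ⟨a', ha', rfl⟩, hlt, rfl⟩
  exact ⟨a' - a, hXD ⟨a, ha, a', ha', lt_of_mul_lt_mul_left' hlt, rfl⟩, Nat.mul_sub m a' a⟩

end IsDeltaSet

section FiniteSums

variable {a : Stream' ℕ}

theorem pos_of_mem_FS (ha : ∀ i, 0 < a.get i) {m : ℕ} (hm : m ∈ Hindman.FS a) : 0 < m := by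
  induction hm with
  | head' a => exact ha 0
  | tail' a _ _ ih => exact ih fun i => ha (i + 1)
  | cons' a m _ _ => exact Nat.add_pos_left (ha 0) m

theorem isDeltaSet_FS (ha : ∀ i, 0 < a.get i) : IsDeltaSet (Hindman.FS a) := by
  let S : ℕ → ℕ := fun n => ∑ i ∈ Finset.range n, a.get i
  have hS : StrictMono S := strictMono_nat_of_lt_succ fun n => by
    simpa only [S, Finset.sum_range_succ] using Nat.lt_add_of_pos_right (ha n)
  refine ⟨Set.range S, Set.infinite_range_of_injective hS.injective, ?_⟩
  rintro _ ⟨_, ⟨i, rfl⟩, _, ⟨j, rfl⟩, hlt, rfl⟩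
  have hij : i < j := hS.lt_iff_lt.1 hlt
  have hsum : S j - S i = ∑ l ∈ Finset.Ico i j, a.get l :=
    Nat.sub_eq_of_eq_add' (Finset.sum_range_add_sum_Ico _ hij.le).symm
  rw [hsum]
  exact Hindman.FS.finsetSum a _ (Finset.nonempty_Ico.2 hij)

end FiniteSums

theorem exists_ultrafilter_forall_isDeltaSet : ∃ U : Ultrafilter ℕ, ∀ D ∈ U, IsDeltaSet D := by
  obtain ⟨U, hidem, hFS⟩ := Hindman.exists_idempotent_ultrafilter_le_FS (Stream'.const (1 : ℕ))
  have hpos : ∀ᶠ m in U, 0 < m := hFS.mono fun m => pos_of_mem_FS fun _ => Nat.one_pos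
  refine ⟨U, fun D hD => ?_⟩
  obtain ⟨a, ha⟩ := Hindman.exists_FS_of_large U hidem _ (Filter.inter_mem hD hpos)
  have ha_pos (i : ℕ) : 0 < a.get i := (ha (Hindman.FS.singleton a i)).2
  exact (isDeltaSet_FS ha_pos).mono fun m hm => (ha hm).1

theorem IsDeltaStar.eventually_mul_mem {A : Set ℕ} (hA : IsDeltaStar A) {U : Ultrafilter ℕ}
    (hU : ∀ D ∈ U, IsDeltaSet D) {m : ℕ} (hm : 0 < m) : ∀ᶠ t in U, m * t ∈ A := by
  by_contra hnot
  have hD : IsDeltaSet {t | m * t ∉ A} := hU _ (Ultrafilter.eventually_not.2 hnot)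
  obtain ⟨_, hxA, t, ht, rfl⟩ := hA _ (hD.image_mul_left hm)
  exact ht hxA

theorem exists_seq_of_forall_exists {α : Type*} {p : α → Prop} {R : α → α → Prop}
    (h₀ : ∃ x, p x) (h : ∀ x, p x → ∃ y, p y ∧ R x y) :
    ∃ f : ℕ → α, ∀ n, p (f n) ∧ R (f n) (f (n + 1)) := by
  obtain ⟨x₀, hx₀⟩ := h₀
  choose! g hgp hgR using h
  have hp (n : ℕ) : p (g^[n] x₀) := Function.Iterate.rec p hx₀ hgp n
  refine ⟨fun n => g^[n] x₀, fun n => ⟨hp n, ?_⟩⟩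
  simpa only [Function.iterate_succ_apply'] using hgR _ (hp n)

section Coloring

variable {κ : Type*}

theorem exists_diffSet_inter_diffSet_nonempty [Fintype κ] (χ : ℕ → κ) (X : κ → Finset ℕ)
    (hX : ∀ s, Fintype.card κ < (X s).card) :
    ∃ s, (diffSet (χ ⁻¹' {s}) ∩ diffSet (X s)).Nonempty := by
  obtain ⟨M, hM⟩ := (Finset.univ.biUnion X).bddAbove
  have hle {s x} (hx : x ∈ X s) : x ≤ M := hM (Finset.mem_biUnion.2 ⟨s, Finset.mem_univ s, hx⟩)
  let r := Fintype.card κ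
  -- `r * M + 1` is the least `N` with `r * (N + M) < N * (r + 1)`.
  let N := r * M + 1
  let pairs : Finset (Σ _ : ℕ, ℕ) := (Finset.range N).sigma fun a => X (χ a)
  let targets : Finset (κ × ℕ) := Finset.univ ×ˢ Finset.range (N + M)
  have hcard : targets.card < pairs.card := calc
    targets.card = r * (N + M) := by simp [targets, r]
    _ < N * (r + 1) := by simp only [N]; linarith
    _ ≤ pairs.card := by
      simpa [pairs] using
        Finset.card_nsmul_le_sum (Finset.range N) (fun a => (X (χ a)).card) (r + 1)
          fun a _ => hX (χ a)
  obtain ⟨⟨a, x⟩, hax, ⟨a', x'⟩, hax', hne, heq⟩ :=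
    Finset.exists_ne_map_eq_of_card_lt_of_maps_to hcard
      (f := fun p => (χ p.1, p.1 + p.2)) fun p hp => by
        obtain ⟨ha, hx⟩ := Finset.mem_sigma.1 hp
        simpa [targets] using Nat.add_lt_add_of_lt_of_le (Finset.mem_range.1 ha) (hle hx)
  obtain ⟨hχ, hsum⟩ : χ a = χ a' ∧ a + x = a' + x' := Prod.mk.inj heq
  have hx : x ∈ X (χ a) := (Finset.mem_sigma.1 hax).2
  have hx' : x' ∈ X (χ a) := hχ ▸ (Finset.mem_sigma.1 hax').2
  have hxx' : x ≠ x' := by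
    rintro rfl
    exact hne (by rw [Nat.add_right_cancel hsum])
  rcases hxx'.lt_or_gt with hlt | hlt
  · exact ⟨χ a, x' - x, ⟨a', hχ.symm, a, rfl, by omega, by omega⟩, x, hx, x', hx', hlt, rfl⟩
  · exact ⟨χ a, x - x', ⟨a, rfl, a', hχ.symm, by omega, by omega⟩, x', hx', x, hx, hlt, rfl⟩

theorem exists_isDeltaStar_diffSet_preimage [Finite κ] (χ : ℕ → κ) :
    ∃ s, IsDeltaStar (diffSet (χ ⁻¹' {s})) := by
  cases nonempty_fintype κ
  by_contra! hnot
  simp only [IsDeltaStar, not_forall, Set.not_nonempty_iff_eq_empty] at hnot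
  choose D hD hdisj using hnot
  choose X hX hXD using hD
  choose Y hYX hY using fun s => (hX s).exists_subset_card_eq (Fintype.card κ + 1)
  obtain ⟨s, d, hdχ, hdY⟩ :=
    exists_diffSet_inter_diffSet_nonempty χ Y fun s => (hY s).symm ▸ Nat.lt_succ_self _
  exact (hdisj s).le ⟨hdχ, hXD s (diffSet_mono (hYX s) hdY)⟩

theorem exists_seq_color_eq_color_pow_mul_eq [Finite κ] {k : ℕ} (hk : 0 < k) (c : ℕ → κ) :
    ∃ s, ∃ x : ℕ → ℕ, ∀ n, 0 < x n ∧ c (x n) = s ∧ c (k ^ x n * x (n + 1)) = s := by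
  obtain ⟨U, hU⟩ := exists_ultrafilter_forall_isDeltaSet
  have hlim (n : ℕ) : ∃ s, ∀ᶠ t in U, c (k ^ n * t) = s :=
    Ultrafilter.eventually_exists_iff.1 (.of_forall fun _ => ⟨_, rfl⟩)
  choose χ hχ using hlim
  obtain ⟨s, hs⟩ := exists_isDeltaStar_diffSet_preimage χ
  set Δ := diffSet (χ ⁻¹' {s})
  have hΔ (m : ℕ) : ∀ᶠ t in U, k ^ m * t ∈ Δ := hs.eventually_mul_mem hU (Nat.pow_pos hk)
  have step (x : ℕ) (hx : x ∈ Δ) : ∃ y, (y ∈ Δ ∧ c y = s) ∧ c (k ^ x * y) = s := by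
    obtain ⟨-, m, hm : χ m = s, hmx : χ (m + x) = s⟩ := mem_diffSet_iff.1 hx
    obtain ⟨t, htΔ, htm, htmx⟩ := ((hΔ m).and ((hχ m).and (hχ (m + x)))).exists
    refine ⟨k ^ m * t, ⟨htΔ, htm.trans hm⟩, ?_⟩
    rw [← mul_assoc, ← pow_add, add_comm x m, htmx, hmx]
  obtain ⟨t, ht⟩ := (hΔ 0).exists
  have hstart : ∃ y, y ∈ Δ ∧ c y = s := (step _ ht).imp fun _ => And.left
  obtain ⟨x, hx⟩ := exists_seq_of_forall_exists hstart fun y hy => step y hy.1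
  exact ⟨s, x, fun n => ⟨(mem_diffSet_iff.1 (hx n).1.1).1, (hx n).1.2, (hx n).2⟩⟩

end Coloring

theorem stmt15_general {ι : Type*} [Finite ι] {k : ℕ} (hk : 2 ≤ k) {C : ι → Set ℕ}
    (hcover : Set.range (fun n : ℕ => k ^ n) ⊆ ⋃ i, C i) :
    ∃ s, ∃ b : ℕ → ℕ, ∀ n : ℕ,
      2 ≤ b n ∧ b n ∈ C s ∧ (b (n + 1)) ^ (b n) ∈ C s := by
  have hcolor (n : ℕ) : ∃ s, k ^ n ∈ C s := Set.mem_iUnion.1 (hcover ⟨n, rfl⟩)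
  choose c hc using hcolor
  obtain ⟨s, x, hx⟩ := exists_seq_color_eq_color_pow_mul_eq (Nat.zero_lt_of_lt hk) c
  refine ⟨s, fun n => k ^ x n, fun n => ?_⟩
  obtain ⟨hpos, hcx, hcxx⟩ := hx n
  refine ⟨hk.trans (Nat.le_self_pow hpos.ne' k), hcx ▸ hc (x n), ?_⟩
  rw [← pow_mul, mul_comm, ← hcxx]
  exact hc _

theorem stmt15 (r : ℕ) (C : Fin r → Set ℕ) (hcover : (⋃ i, C i) = Set.univ) :
    ∃ s, ∃ b : ℕ → ℕ, ∀ n : ℕ,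
      2 ≤ b n ∧ b n ∈ C s ∧ (b (n + 1)) ^ (b n) ∈ C s :=
  stmt15_general (k := 2) le_rfl (hcover ▸ Set.subset_univ _)
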